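/- Fix an integer n ≥ 1 and δ ∈ (0,1). Suppose the noises satisfy the Bernstein condition with parameters (σ_t, B): E[|ε_t|^m | F_{t-1}] ≤ (1/2) m! B^{m−2} σ_t² for all m ≥ 2 and all 1 ≤ t ≤ n, with σ_t F_{t-1}-measurable. Suppose moreover that Σ_{i=1}^n σ_i² ‖G_i‖² ≤ C_n² almost surely, where C_n ≥ 0 is a deterministic constant. Then with probability at least 1 − δ, sup_{1 ≤ t ≤ n} ‖(ρI + V_t)^{-1/2} M_t‖ ≤ B log(2/δ) + C_n sqrt(2 log(2/δ)). -/

import Mathlib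

open MeasureTheory Filter Real
open scoped RealInnerProductSpace

noncomputable def outerProd {H : Type*} [NormedAddCommGroup H] [InnerProductSpace ℝ H]
    (x : H) : H →L[ℝ] H :=
  (innerSL ℝ x).smulRight x

/-!
Fix `l ≥ 0` with `l B < 1` and let `T_t = (ρ I + V_t)^{-1/2}`, `D_t = ∑_{i ≤ t} σ_i² ‖T_i X_i‖²`
and `ψ(l) = l² / (2 (1 - l B))`. The process `exp (-ψ(l) D_t) cosh (l ‖T_t M_t‖)` is a nonnegative
supermartingale started at `1`. Indeed, by the Sherman–Morrison formula, enlarging the Gram operator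
can only decrease `‖T M_t‖`, and it leaves `‖T_{t+1} X_{t+1}‖ ≤ 1`. It then remains to average over
`ε_{t+1}` the inequality `cosh ‖a + g‖ ≤ cosh ‖a‖ (e^‖g‖ - ‖g‖) + (sinh ‖a‖ / ‖a‖) ⟪a, g⟫`, which
follows from the convexity of `z ↦ cosh √z`: the inner product has conditional mean zero, and
Bernstein's condition bounds the conditional mean of `e^‖g‖ - ‖g‖` by `exp (ψ(l) σ_{t+1}² ‖g'‖²)`
for `g = ε_{t+1} l g'` and `g' = T_{t+1} X_{t+1}`. Ville's inequality bounds the probability that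
`‖T_t M_t‖` ever reaches a level `r` by `2 exp (ψ(l) C_n² - l r)`, and optimising over `l` gives the
stated radius.
-/

open ProbabilityTheory

section Hyperbolic

lemma convexOn_cosh_sqrt : ConvexOn ℝ (Set.Ici 0) fun z ↦ cosh √z := by
  have hasSum_cosh_sqrt {z : ℝ} (hz : 0 ≤ z) :
      HasSum (fun k : ℕ ↦ z ^ k / ((2 * k).factorial : ℝ)) (cosh √z) := by
    simpa only [pow_mul, sq_sqrt hz] using hasSum_cosh √z
  refine ⟨convex_Ici 0, fun x hx y hy c d hc hd hcd ↦ ?_⟩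
  have hx' : 0 ≤ x := hx
  have hy' : 0 ≤ y := hy
  refine hasSum_le (fun k ↦ ?_)
    (hasSum_cosh_sqrt (add_nonneg (smul_nonneg hc hx') (smul_nonneg hd hy')))
    (((hasSum_cosh_sqrt hx').mul_left c).add ((hasSum_cosh_sqrt hy').mul_left d))
  have hpow := (convexOn_pow k).2 hx hy hc hd hcd
  simp only [smul_eq_mul] at hpow ⊢
  calc (c * x + d * y) ^ k / ((2 * k).factorial : ℝ)
      ≤ (c * x ^ k + d * y ^ k) / ((2 * k).factorial : ℝ) := by gcongr
    _ = c * (x ^ k / (2 * k).factorial) + d * (y ^ k / (2 * k).factorial) := by ring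

variable {H : Type*} [NormedAddCommGroup H] [InnerProductSpace ℝ H]

lemma cosh_norm_add_le_cos_angle (a g : H) :
    cosh ‖a + g‖ ≤ cosh ‖a‖ * cosh ‖g‖ +
      cos (InnerProductGeometry.angle a g) * (sinh ‖a‖ * sinh ‖g‖) := by
  set c := cos (InnerProductGeometry.angle a g)
  have hinner : ⟪a, g⟫ = ‖a‖ * ‖g‖ * c :=
    (InnerProductGeometry.cos_angle_mul_norm_mul_norm a g).symm.trans (mul_comm _ _)
  have hsq : ‖a + g‖ ^ 2 =
      (1 + c) / 2 * (‖a‖ + ‖g‖) ^ 2 + (1 - c) / 2 * (‖a‖ - ‖g‖) ^ 2 := by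
    rw [norm_add_sq_real, hinner]; ring
  have hconv := convexOn_cosh_sqrt.2 (sq_nonneg (‖a‖ + ‖g‖)) (sq_nonneg (‖a‖ - ‖g‖))
    (show 0 ≤ (1 + c) / 2 by linarith [neg_one_le_cos (InnerProductGeometry.angle a g)])
    (show 0 ≤ (1 - c) / 2 by linarith [cos_le_one (InnerProductGeometry.angle a g)]) (by ring)
  simp only [smul_eq_mul, ← hsq, sqrt_sq_eq_abs, abs_norm, cosh_abs, cosh_add, cosh_sub] at hconv
  linarith

-- The first-order term in `g` is kept exact, so that it vanishes on averaging over centred `g`.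
lemma cosh_norm_add_le (a g : H) :
    cosh ‖a + g‖ ≤ cosh ‖a‖ * (exp ‖g‖ - ‖g‖) + sinh ‖a‖ / ‖a‖ * ⟪a, g⟫ := by
  set c := cos (InnerProductGeometry.angle a g) with hc
  have hlinear : sinh ‖a‖ / ‖a‖ * ⟪a, g⟫ = c * (sinh ‖a‖ * ‖g‖) := by
    rw [← InnerProductGeometry.cos_angle_mul_norm_mul_norm a g, ← hc]
    rcases eq_or_ne ‖a‖ 0 with ha | ha
    · simp [ha]
    · field_simp
  have hc_sinh : c * sinh ‖a‖ ≤ cosh ‖a‖ :=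
    (mul_le_of_le_one_left (sinh_nonneg_iff.2 (norm_nonneg a)) (cos_le_one _)).trans
      (sinh_lt_cosh _).le
  have hsinh : ‖g‖ ≤ sinh ‖g‖ := self_le_sinh_iff.2 (norm_nonneg g)
  have hgap := mul_nonneg (sub_nonneg.2 hc_sinh) (sub_nonneg.2 hsinh)
  have hangle := cosh_norm_add_le_cos_angle a g
  rw [hlinear, ← cosh_add_sinh ‖g‖]
  linarith

end Hyperbolic

section Bernstein

lemma integrable_and_integral_le_of_hasSum {α : Type*} {mα : MeasurableSpace α} {ν : Measure α}
    {F : ℕ → α → ℝ} {f : α → ℝ} {c : ℕ → ℝ} {s : ℝ} (hF_nonneg : ∀ k a, 0 ≤ F k a)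
    (hF_int : ∀ k, Integrable (F k) ν) (hf : ∀ a, HasSum (F · a) (f a))
    (hF_le : ∀ k, ∫ a, F k a ∂ν ≤ c k) (hc : HasSum c s) :
    Integrable f ν ∧ ∫ a, f a ∂ν ≤ s := by
  have hF_integral_nonneg k : 0 ≤ ∫ a, F k a ∂ν := integral_nonneg (hF_nonneg k)
  have hsummable : Summable fun k ↦ ∫ a, F k a ∂ν :=
    hc.summable.of_nonneg_of_le hF_integral_nonneg hF_le
  have hlintegral : ∫⁻ a, ENNReal.ofReal (f a) ∂ν ≤ ENNReal.ofReal s := by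
    calc ∫⁻ a, ENNReal.ofReal (f a) ∂ν
        = ∫⁻ a, ∑' k, ENNReal.ofReal (F k a) ∂ν := by
          refine lintegral_congr fun a ↦ ?_
          rw [← (hf a).tsum_eq, ENNReal.ofReal_tsum_of_nonneg (hF_nonneg · a) (hf a).summable]
      _ = ∑' k, ENNReal.ofReal (∫ a, F k a ∂ν) := by
          rw [lintegral_tsum fun k ↦ (hF_int k).aemeasurable.ennreal_ofReal]
          simp only [ofReal_integral_eq_lintegral_ofReal (hF_int _) (ae_of_all _ (hF_nonneg _))]
      _ = ENNReal.ofReal (∑' k, ∫ a, F k a ∂ν) :=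
          (ENNReal.ofReal_tsum_of_nonneg hF_integral_nonneg hsummable).symm
      _ ≤ ENNReal.ofReal s :=
          ENNReal.ofReal_le_ofReal (hasSum_le hF_le hsummable.hasSum hc)
  have hf_nonneg a : 0 ≤ f a := (hf a).nonneg (hF_nonneg · a)
  have hf_meas : AEStronglyMeasurable f ν :=
    aestronglyMeasurable_of_tendsto_ae atTop
      (fun n ↦ Finset.aestronglyMeasurable_fun_sum (Finset.range n)
        fun k _ ↦ (hF_int k).aestronglyMeasurable)
      (ae_of_all _ fun a ↦ (hf a).tendsto_sum_nat)
  have hf_int : Integrable f ν :=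
    ⟨hf_meas, (hasFiniteIntegral_iff_ofReal (ae_of_all _ hf_nonneg)).2
      (hlintegral.trans_lt ENNReal.ofReal_lt_top)⟩
  rw [← ofReal_integral_eq_lintegral_ofReal hf_int (ae_of_all _ hf_nonneg)] at hlintegral
  have hs : 0 ≤ s := hc.nonneg fun k ↦ (hF_integral_nonneg k).trans (hF_le k)
  exact ⟨hf_int, (ENNReal.ofReal_le_ofReal_iff hs).1 hlintegral⟩

/-- The real measure `ν` is centred and satisfies Bernstein's moment condition with variance
proxy `v` and scale `B`. -/
structure HasBernsteinMoments (ν : Measure ℝ) (v B : ℝ) : Prop where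
  integrable_abs_pow : ∀ m : ℕ, Integrable (fun y ↦ |y| ^ m) ν
  integral_eq_zero : ∫ y, y ∂ν = 0
  integral_abs_pow_le : ∀ m : ℕ, 2 ≤ m →
    ∫ y, |y| ^ m ∂ν ≤ 1 / 2 * (m.factorial : ℝ) * B ^ (m - 2) * v

/-- Bernstein's bound `l² / (2 (1 - l B))` on the log-Laplace transform at `l` of a variable of
unit variance proxy and scale `B`; it is meaningful for `l B < 1`. -/
noncomputable def bernsteinExponent (B l : ℝ) : ℝ :=
  l ^ 2 / (2 * (1 - l * B))

lemma hasSum_exp_sub_self_sub_one (x : ℝ) :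
    HasSum (fun k : ℕ ↦ x ^ (k + 2) / ((k + 2).factorial : ℝ)) (exp x - x - 1) := by
  have h := (hasSum_nat_add_iff' 2).2 (NormedSpace.expSeries_div_hasSum_exp x)
  simpa [← Real.exp_eq_exp_ℝ, Finset.sum_range_succ, sub_sub, add_comm] using h

variable {B l b : ℝ}

lemma bernsteinExponent_nonneg (hlB : l * B ≤ 1) : 0 ≤ bernsteinExponent B l :=
  div_nonneg (sq_nonneg l) (by linarith)

lemma bernsteinExponent_mul_le (hB : 0 ≤ B) (hl : 0 ≤ l) (hlB : l * B < 1) (hb : b ≤ 1) :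
    bernsteinExponent B (l * b) ≤ bernsteinExponent B l * b ^ 2 := by
  have hlbB : l * b * B ≤ l * B := by
    gcongr
    exact mul_le_of_le_one_right hl hb
  have : 0 < 1 - l * B := sub_pos.2 hlB
  calc (l * b) ^ 2 / (2 * (1 - l * b * B)) ≤ (l * b) ^ 2 / (2 * (1 - l * B)) := by gcongr
    _ = l ^ 2 / (2 * (1 - l * B)) * b ^ 2 := by ring

-- The minimiser of the left-hand side over `l` is `√(2L) / (C + B √(2L))`.
lemma exists_bernsteinExponent_mul_sub_eq {C L : ℝ} (hB : 0 ≤ B) (hC : 0 < C) (hL : 0 < L) :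
    ∃ l, 0 ≤ l ∧ l * B < 1 ∧
      bernsteinExponent B l * C ^ 2 - l * (B * L + C * √(2 * L)) = -L := by
  set s := √(2 * L) with hs
  have hs_pos : 0 < s := sqrt_pos.2 (by positivity)
  have hL_eq : L = s ^ 2 / 2 := by rw [hs, sq_sqrt (by positivity)]; ring
  have hslack : 1 - s / (C + B * s) * B = C / (C + B * s) := by field_simp; ring
  refine ⟨s / (C + B * s), by positivity, sub_pos.1 (hslack ▸ by positivity), ?_⟩
  rw [bernsteinExponent, hslack, hL_eq]
  field_simp
  ring

namespace HasBernsteinMoments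

variable {ν : Measure ℝ} {v : ℝ}

lemma integrable_id (h : HasBernsteinMoments ν v B) : Integrable (fun y ↦ y) ν :=
  (integrable_norm_iff (by fun_prop)).1 (by simpa using h.integrable_abs_pow 1)

lemma integrable_and_integral_exp_sub_le (h : HasBernsteinMoments ν v B) (hB : 0 ≤ B) {θ : ℝ}
    (hθ : 0 ≤ θ) (hθB : θ * B < 1) :
    Integrable (fun y ↦ exp (θ * |y|) - θ * |y| - 1) ν ∧
      ∫ y, (exp (θ * |y|) - θ * |y| - 1) ∂ν ≤ bernsteinExponent B θ * v := by
  have hgeom : HasSum (fun k : ℕ ↦ θ ^ 2 * v / 2 * (θ * B) ^ k) (bernsteinExponent B θ * v) := by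
    have hne : 1 - θ * B ≠ 0 := (sub_pos.2 hθB).ne'
    convert! (hasSum_geometric_of_lt_one (by positivity) hθB).mul_left (θ ^ 2 * v / 2) using 1
    rw [bernsteinExponent]
    field_simp
  refine integrable_and_integral_le_of_hasSum (fun k y ↦ by positivity) (fun k ↦ ?_)
    (fun y ↦ hasSum_exp_sub_self_sub_one (θ * |y|)) (fun k ↦ ?_) hgeom
  · simp only [mul_pow]
    exact ((h.integrable_abs_pow (k + 2)).const_mul _).div_const _
  · simp only [mul_pow θ |_|]
    rw [integral_div, integral_const_mul, div_le_iff₀ (by positivity)]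
    calc θ ^ (k + 2) * ∫ y, |y| ^ (k + 2) ∂ν
        ≤ θ ^ (k + 2) * (1 / 2 * ((k + 2).factorial : ℝ) * B ^ k * v) := by
          gcongr
          exact h.integral_abs_pow_le (k + 2) (by omega)
      _ = θ ^ 2 * v / 2 * (θ * B) ^ k * ((k + 2).factorial : ℝ) := by ring

variable {H : Type*} [NormedAddCommGroup H] [InnerProductSpace ℝ H]

lemma integrable_and_integral_cosh_norm_add_smul_le [IsProbabilityMeasure ν]
    (h : HasBernsteinMoments ν v B) (hB : 0 ≤ B) (a g : H) (hg : ‖g‖ * B < 1) :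
    Integrable (fun y ↦ cosh ‖a + y • g‖) ν ∧
      ∫ y, cosh ‖a + y • g‖ ∂ν ≤ cosh ‖a‖ * exp (bernsteinExponent B ‖g‖ * v) := by
  obtain ⟨hexp_int, hexp_le⟩ := h.integrable_and_integral_exp_sub_le hB (norm_nonneg g) hg
  set φ : ℝ → ℝ := fun y ↦ exp (‖g‖ * |y|) - ‖g‖ * |y| - 1
  set κ := sinh ‖a‖ / ‖a‖ * ⟪a, g⟫
  have hφ_int : Integrable (fun y ↦ cosh ‖a‖ * (φ y + 1)) ν :=
    (hexp_int.add (integrable_const 1)).const_mul _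
  have hκ_int : Integrable (fun y ↦ κ * y) ν := h.integrable_id.const_mul κ
  have hbound y : cosh ‖a + y • g‖ ≤ cosh ‖a‖ * (φ y + 1) + κ * y := by
    refine (cosh_norm_add_le a (y • g)).trans_eq ?_
    simp only [φ, κ, norm_smul, norm_eq_abs, real_inner_smul_right, sub_add_cancel]
    ring_nf
  have hcosh_int : Integrable (fun y ↦ cosh ‖a + y • g‖) ν := by
    refine (hφ_int.add hκ_int).mono' ?_ (ae_of_all _ fun y ↦ ?_)
    · exact (continuous_cosh.comp (by fun_prop)).aestronglyMeasurable
    · rw [norm_of_nonneg (cosh_pos _).le]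
      exact hbound y
  refine ⟨hcosh_int, ?_⟩
  calc ∫ y, cosh ‖a + y • g‖ ∂ν
      ≤ ∫ y, (cosh ‖a‖ * (φ y + 1) + κ * y) ∂ν :=
        integral_mono hcosh_int (hφ_int.add hκ_int) hbound
    _ = cosh ‖a‖ * (∫ y, φ y ∂ν + 1) := by
        rw [integral_add hφ_int hκ_int, integral_const_mul, integral_const_mul,
          h.integral_eq_zero, integral_add hexp_int (integrable_const 1)]
        simp
    _ ≤ cosh ‖a‖ * exp (bernsteinExponent B ‖g‖ * v) := by
        gcongr
        exact (add_le_add_left hexp_le 1).trans (add_one_le_exp _)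

end HasBernsteinMoments

end Bernstein

section Conditional

variable {Ω β : Type*} {m0 : MeasurableSpace Ω} {mβ : MeasurableSpace β} {μ : Measure Ω}

lemma integrable_and_condExp_le_of_condDistrib [IsFiniteMeasure μ] {E : Type*} [MeasurableSpace E]
    [StandardBorelSpace E] [Nonempty E] {Z : Ω → β} {Y : Ω → E} (hZ : Measurable Z)
    (hY : AEMeasurable Y μ) {f : β × E → ℝ} (hf : Measurable f) (hf_nonneg : ∀ p, 0 ≤ f p)
    {g : Ω → ℝ} (hg : Integrable g μ)
    (hfg : ∀ᵐ ω ∂μ, Integrable (fun y ↦ f (Z ω, y)) (condDistrib Y Z μ (Z ω)) ∧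
      ∫ y, f (Z ω, y) ∂condDistrib Y Z μ (Z ω) ≤ g ω) :
    Integrable (fun ω ↦ f (Z ω, Y ω)) μ ∧ μ[fun ω ↦ f (Z ω, Y ω) | mβ.comap Z] ≤ᵐ[μ] g := by
  have hfiber_meas : MeasurableSet
      {z | Integrable (fun y ↦ f (z, y)) (condDistrib Y Z μ z)} :=
    measurableSet_kernel_integrable hf.stronglyMeasurable
  have hfiber_int : ∀ᵐ z ∂μ.map Z, Integrable (fun y ↦ f (z, y)) (condDistrib Y Z μ z) :=
    (ae_map_iff hZ.aemeasurable hfiber_meas).2 (hfg.mono fun _ h ↦ h.1)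
  have hintegral_int :
      Integrable (fun z ↦ ∫ y, ‖f (z, y)‖ ∂condDistrib Y Z μ z) (μ.map Z) := by
    simp only [norm_of_nonneg (hf_nonneg _)]
    have hmeas := hf.stronglyMeasurable.integral_condDistrib (X := Z) (Y := Y) (μ := μ)
    refine (integrable_map_measure hmeas.aestronglyMeasurable hZ.aemeasurable).2
      (hg.mono' (hmeas.comp_measurable hZ).aestronglyMeasurable ?_)
    filter_upwards [hfg] with ω hω
    rw [Function.comp_apply, norm_of_nonneg (integral_nonneg fun y ↦ hf_nonneg _)]
    exact hω.2
  have hint : Integrable f (μ.map fun ω ↦ (Z ω, Y ω)) :=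
    (hf.aestronglyMeasurable.ae_integrable_condDistrib_map_iff hY).1 ⟨hfiber_int, hintegral_int⟩
  refine ⟨hint.comp_aemeasurable (hZ.aemeasurable.prodMk hY), ?_⟩
  filter_upwards [condExp_prod_ae_eq_integral_condDistrib' hZ hY hint, hfg] with ω hcond hω
  exact hcond.trans_le hω.2

/-- Conditionally on `m`, the variable `Y` is centred and satisfies Bernstein's moment condition
with variance proxy `v` and scale `B`. -/
structure HasCondBernsteinMoments (μ : Measure Ω) (m : MeasurableSpace Ω) (Y v : Ω → ℝ) (B : ℝ) :
    Prop where
  aemeasurable : AEMeasurable Y μ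
  integrable_abs_pow : ∀ k : ℕ, Integrable (fun ω ↦ |Y ω| ^ k) μ
  condExp_eq_zero : μ[Y | m] =ᵐ[μ] 0
  condExp_abs_pow_le : ∀ k : ℕ, 2 ≤ k →
    μ[fun ω ↦ |Y ω| ^ k | m] ≤ᵐ[μ] fun ω ↦ 1 / 2 * (k.factorial : ℝ) * B ^ (k - 2) * v ω

namespace HasCondBernsteinMoments

variable {Z : Ω → β} {Y v : Ω → ℝ} {B : ℝ}

lemma integrable {m : MeasurableSpace Ω} (h : HasCondBernsteinMoments μ m Y v B) :
    Integrable Y μ :=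
  (integrable_norm_iff h.aemeasurable.aestronglyMeasurable).1
    (by simpa using h.integrable_abs_pow 1)

lemma ae_variance_nonneg {m : MeasurableSpace Ω} (h : HasCondBernsteinMoments μ m Y v B) :
    ∀ᵐ ω ∂μ, 0 ≤ v ω := by
  have hsq_nonneg : 0 ≤ᵐ[μ] μ[fun ω ↦ |Y ω| ^ 2 | m] :=
    condExp_nonneg (ae_of_all _ fun ω ↦ by positivity)
  filter_upwards [h.condExp_abs_pow_le 2 le_rfl, hsq_nonneg] with ω hle hnonneg
  simpa using hnonneg.trans hle

lemma ae_hasBernsteinMoments_condDistrib [IsFiniteMeasure μ]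
    (h : HasCondBernsteinMoments μ (mβ.comap Z) Y v B) (hZ : Measurable Z) :
    ∀ᵐ ω ∂μ, HasBernsteinMoments (condDistrib Y Z μ (Z ω)) (v ω) B := by
  have habs_meas (k : ℕ) : Measurable fun y : ℝ ↦ |y| ^ k := by fun_prop
  have habs_int : ∀ᵐ ω ∂μ, ∀ k : ℕ,
      Integrable (fun y ↦ |y| ^ k) (condDistrib Y Z μ (Z ω)) :=
    ae_all_iff.2 fun k ↦ Integrable.condDistrib_ae hZ.aemeasurable h.aemeasurable <|
      (integrable_map_measure ((habs_meas k).comp measurable_snd).aestronglyMeasurable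
        (hZ.aemeasurable.prodMk h.aemeasurable)).2 (h.integrable_abs_pow k)
  have hmoment : ∀ᵐ ω ∂μ, ∀ k : ℕ, 2 ≤ k → ∫ y, |y| ^ k ∂condDistrib Y Z μ (Z ω) ≤
      1 / 2 * (k.factorial : ℝ) * B ^ (k - 2) * v ω := by
    refine ae_all_iff.2 fun k ↦ eventually_imp_distrib_left.2 fun hk ↦ ?_
    filter_upwards [h.condExp_abs_pow_le k hk, condExp_ae_eq_integral_condDistrib hZ
      h.aemeasurable (habs_meas k).stronglyMeasurable (h.integrable_abs_pow k)] with ω hle heq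
    exact heq.symm.trans_le hle
  filter_upwards [habs_int, hmoment, h.condExp_eq_zero,
    condExp_ae_eq_integral_condDistrib' hZ h.integrable] with ω hint hle hzero heq
  exact ⟨hint, heq.symm.trans hzero, hle⟩

variable {H : Type*} [NormedAddCommGroup H] [InnerProductSpace ℝ H]

lemma integrable_and_condExp_mul_cosh_le [IsFiniteMeasure μ]
    (h : HasCondBernsteinMoments μ (mβ.comap Z) Y v B) (hZ : Measurable Z) (hB : 0 ≤ B)
    {w : β → ℝ} (hw : Measurable w) (hw_nonneg : ∀ z, 0 ≤ w z) {a g : β → H}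
    (hag : Measurable fun p : β × ℝ ↦ ‖a p.1 + p.2 • g p.1‖) (hg : ∀ z, ‖g z‖ * B < 1)
    {u : Ω → ℝ} (hu : Integrable u μ)
    (hle : ∀ᵐ ω ∂μ,
      w (Z ω) * (cosh ‖a (Z ω)‖ * exp (bernsteinExponent B ‖g (Z ω)‖ * v ω)) ≤ u ω) :
    Integrable (fun ω ↦ w (Z ω) * cosh ‖a (Z ω) + Y ω • g (Z ω)‖) μ ∧
      μ[fun ω ↦ w (Z ω) * cosh ‖a (Z ω) + Y ω • g (Z ω)‖ | mβ.comap Z] ≤ᵐ[μ] u := by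
  refine integrable_and_condExp_le_of_condDistrib
    (f := fun p ↦ w p.1 * cosh ‖a p.1 + p.2 • g p.1‖) hZ h.aemeasurable
    ((hw.comp measurable_fst).mul (measurable_cosh.comp hag))
    (fun p ↦ mul_nonneg (hw_nonneg p.1) (cosh_pos _).le) hu ?_
  filter_upwards [h.ae_hasBernsteinMoments_condDistrib hZ, hle] with ω hmoments hω
  obtain ⟨hint, hcosh⟩ :=
    hmoments.integrable_and_integral_cosh_norm_add_smul_le hB (a (Z ω)) (g (Z ω)) (hg (Z ω))
  refine ⟨hint.const_mul _, ?_⟩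
  rw [integral_const_mul]
  exact (mul_le_mul_of_nonneg_left hcosh (hw_nonneg _)).trans hω

end HasCondBernsteinMoments

end Conditional

section SymmInvSqrt

variable {H : Type*} [NormedAddCommGroup H] [InnerProductSpace ℝ H]

lemma outerProd_apply (x y : H) : outerProd x y = ⟪x, y⟫ • x := rfl

/-- `T` is a symmetric operator whose square is the two-sided inverse of `A`, as is `A ^ (-1/2)`
for a positive invertible operator `A`. -/
structure IsSymmInvSqrt (T A : H →L[ℝ] H) : Prop where
  isSymmetric : (T : H →ₗ[ℝ] H).IsSymmetric
  apply_apply_map : ∀ y, T (T (A y)) = y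
  map_apply_apply : ∀ y, A (T (T y)) = y

namespace IsSymmInvSqrt

lemma of_isSymmetric {Q T A : H →L[ℝ] H} (hQ : (Q : H →ₗ[ℝ] H).IsSymmetric)
    (hQQ : Q ∘L Q = A) (hTQ : T ∘L Q = 1) (hQT : Q ∘L T = 1) : IsSymmInvSqrt T A := by
  have hTQ_apply y : T (Q y) = y := DFunLike.congr_fun hTQ y
  have hQT_apply y : Q (T y) = y := DFunLike.congr_fun hQT y
  subst hQQ
  refine ⟨fun y z ↦ ?_, fun y ↦ ?_, fun y ↦ ?_⟩
  · calc ⟪T y, z⟫ = ⟪T y, Q (T z)⟫ := by rw [hQT_apply]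
      _ = ⟪Q (T y), T z⟫ := (hQ (T y) (T z)).symm
      _ = ⟪y, T z⟫ := by rw [hQT_apply]
  · rw [ContinuousLinearMap.comp_apply, hTQ_apply, hTQ_apply]
  · rw [ContinuousLinearMap.comp_apply, hQT_apply, hQT_apply]

variable {T T' A : H →L[ℝ] H} {x : H}

lemma inner_apply_apply (hT : IsSymmInvSqrt T A) (y z : H) : ⟪y, T (T z)⟫ = ⟪T y, T z⟫ :=
  (hT.isSymmetric y (T z)).symm

lemma norm_apply_sq (hT : IsSymmInvSqrt T A) (y : H) : ‖T y‖ ^ 2 = ⟪y, T (T y)⟫ := by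
  rw [hT.inner_apply_apply, real_inner_self_eq_norm_sq]

lemma smul_one_apply_apply {ρ : ℝ} (hT : IsSymmInvSqrt T (ρ • 1)) (hρ : ρ ≠ 0) (y : H) :
    T (T y) = ρ⁻¹ • y := by
  have hy : y = (ρ • (1 : H →L[ℝ] H)) (ρ⁻¹ • y) := by simp [smul_smul, hρ]
  rw [hy, hT.apply_apply_map, ← hy]

-- The Sherman–Morrison formula.
lemma add_outerProd_apply_apply (hT : IsSymmInvSqrt T A)
    (hT' : IsSymmInvSqrt T' (A + outerProd x)) (y : H) :
    T' (T' y) = T (T y) - (⟪T x, T y⟫ / (1 + ‖T x‖ ^ 2)) • T (T x) := by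
  set q := ⟪T x, T y⟫ / (1 + ‖T x‖ ^ 2) with hq
  set z := T (T y) - q • T (T x) with hz
  have hxz : ⟪x, z⟫ = q := by
    have hne : 1 + ‖T x‖ ^ 2 ≠ 0 := by positivity
    rw [hz, inner_sub_right, real_inner_smul_right, hT.inner_apply_apply, ← hT.norm_apply_sq, hq]
    field_simp
    ring
  have hy : y = (A + outerProd x) z := by
    rw [add_apply, outerProd_apply, hxz, hz, map_sub, map_smul,
      hT.map_apply_apply, hT.map_apply_apply, sub_add_cancel]
  rw [hy, hT'.apply_apply_map]

lemma norm_add_outerProd_apply_sq (hT : IsSymmInvSqrt T A)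
    (hT' : IsSymmInvSqrt T' (A + outerProd x)) (y : H) :
    ‖T' y‖ ^ 2 = ‖T y‖ ^ 2 - ⟪T x, T y⟫ ^ 2 / (1 + ‖T x‖ ^ 2) := by
  rw [hT'.norm_apply_sq, hT.add_outerProd_apply_apply hT', inner_sub_right,
    real_inner_smul_right, hT.inner_apply_apply, hT.inner_apply_apply, real_inner_self_eq_norm_sq,
    real_inner_comm (T x) (T y)]
  ring

lemma norm_add_outerProd_apply_le (hT : IsSymmInvSqrt T A)
    (hT' : IsSymmInvSqrt T' (A + outerProd x)) (y : H) : ‖T' y‖ ≤ ‖T y‖ := by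
  refine le_of_sq_le_sq ?_ (norm_nonneg _)
  rw [hT.norm_add_outerProd_apply_sq hT']
  exact sub_le_self _ (by positivity)

lemma norm_add_outerProd_apply_self_le_one (hT : IsSymmInvSqrt T A)
    (hT' : IsSymmInvSqrt T' (A + outerProd x)) : ‖T' x‖ ≤ 1 := by
  refine le_of_sq_le_sq ?_ zero_le_one
  have hpos : 0 < 1 + ‖T x‖ ^ 2 := by positivity
  rw [hT.norm_add_outerProd_apply_sq hT', real_inner_self_eq_norm_sq, one_pow,
    sub_le_iff_le_add, ← sub_le_iff_le_add', le_div_iff₀ hpos]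
  linarith [sq_nonneg (‖T x‖ ^ 2)]

end IsSymmInvSqrt

/-- The regularised Gram operator `ρ I + ∑_{1 ≤ i ≤ t} x_i x_iᵀ`. -/
noncomputable def regGram (ρ : ℝ) (x : ℕ → H) (t : ℕ) : H →L[ℝ] H :=
  ρ • 1 + ∑ i ∈ Finset.Icc 1 t, outerProd (x i)

lemma regGram_zero (ρ : ℝ) (x : ℕ → H) : regGram ρ x 0 = ρ • 1 := by
  simp [regGram]

lemma regGram_succ (ρ : ℝ) (x : ℕ → H) (t : ℕ) :
    regGram ρ x (t + 1) = regGram ρ x t + outerProd (x (t + 1)) := by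
  rw [regGram, regGram, Finset.sum_Icc_succ_top (by omega), add_assoc]

section Measurability

variable {Ω : Type*} {m : MeasurableSpace Ω} {ρ : ℝ} {x : ℕ → Ω → H} {T : ℕ → Ω → H →L[ℝ] H}

lemma stronglyMeasurable_apply_apply_of_isSymmInvSqrt_regGram (hρ : ρ ≠ 0)
    (hT : ∀ t ω, IsSymmInvSqrt (T t ω) (regGram ρ (x · ω) t)) {t : ℕ}
    (hx : ∀ i, 1 ≤ i → i ≤ t → StronglyMeasurable (x i)) {y : Ω → H}
    (hy : StronglyMeasurable y) : StronglyMeasurable fun ω ↦ T t ω (T t ω (y ω)) := by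
  induction t generalizing y with
  | zero =>
    have hformula ω : T 0 ω (T 0 ω (y ω)) = ρ⁻¹ • y ω :=
      (regGram_zero ρ (x · ω) ▸ hT 0 ω).smul_one_apply_apply hρ (y ω)
    simp only [hformula]
    exact hy.const_smul ρ⁻¹
  | succ t ih =>
    have hx_succ : StronglyMeasurable (x (t + 1)) := hx (t + 1) (by omega) le_rfl
    have hmeas {z : Ω → H} (hz : StronglyMeasurable z) :
        StronglyMeasurable fun ω ↦ T t ω (T t ω (z ω)) :=
      ih (fun i hi hit ↦ hx i hi (by omega)) hz
    have hformula ω : T (t + 1) ω (T (t + 1) ω (y ω)) = T t ω (T t ω (y ω)) -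
        (⟪x (t + 1) ω, T t ω (T t ω (y ω))⟫ / (1 + ⟪x (t + 1) ω, T t ω (T t ω (x (t + 1) ω))⟫)) •
          T t ω (T t ω (x (t + 1) ω)) := by
      rw [(hT t ω).add_outerProd_apply_apply (regGram_succ ρ (x · ω) t ▸ hT (t + 1) ω),
        (hT t ω).inner_apply_apply, ← (hT t ω).norm_apply_sq]
    simp only [hformula]
    exact (hmeas hy).sub (((hx_succ.inner (hmeas hy)).div
      (stronglyMeasurable_const.add (hx_succ.inner (hmeas hx_succ)))).smul (hmeas hx_succ))

lemma measurable_norm_apply_of_isSymmInvSqrt_regGram (hρ : ρ ≠ 0)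
    (hT : ∀ t ω, IsSymmInvSqrt (T t ω) (regGram ρ (x · ω) t)) {t : ℕ}
    (hx : ∀ i, 1 ≤ i → i ≤ t → StronglyMeasurable (x i)) {y : Ω → H}
    (hy : StronglyMeasurable y) : Measurable fun ω ↦ ‖T t ω (y ω)‖ := by
  have hnorm ω : ‖T t ω (y ω)‖ = √⟪y ω, T t ω (T t ω (y ω))⟫ := by
    rw [← (hT t ω).norm_apply_sq, sqrt_sq (norm_nonneg _)]
  simp only [hnorm]
  exact (hy.inner
    (stronglyMeasurable_apply_apply_of_isSymmInvSqrt_regGram hρ hT hx hy)).measurable.sqrt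

end Measurability

end SymmInvSqrt

section Ville

variable {Ω : Type*} {m0 : MeasurableSpace Ω} {μ : Measure Ω} {ℱ : Filtration ℕ m0}
  {W : ℕ → Ω → ℝ}

lemma supermartingale_min_of_forall_lt [IsFiniteMeasure μ] {n : ℕ}
    (hW_meas : ∀ t ≤ n, StronglyMeasurable[ℱ t] (W t)) (hW_int : ∀ t ≤ n, Integrable (W t) μ)
    (hW_step : ∀ t < n, μ[W (t + 1) | ℱ t] ≤ᵐ[μ] W t) :
    Supermartingale (fun t ↦ W (min t n)) ℱ μ := by
  have hmeas t : StronglyMeasurable[ℱ t] (W (min t n)) :=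
    (hW_meas _ (min_le_right t n)).mono (ℱ.mono (min_le_left t n))
  refine supermartingale_nat hmeas (fun t ↦ hW_int _ (min_le_right t n)) fun t ↦ ?_
  rcases lt_or_ge t n with htn | hnt
  · simpa only [min_eq_left htn.le, min_eq_left (Nat.succ_le_of_lt htn)] using hW_step t htn
  · have hW_min : W (min (t + 1) n) = W (min t n) := by
      rw [min_eq_right hnt, min_eq_right (hnt.trans t.le_succ)]
    rw [hW_min, condExp_of_stronglyMeasurable (ℱ.le t) (hmeas t) (hW_int _ (min_le_right t n))]

-- Ville's maximal inequality: stop `W` the first time it reaches level `c`.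
lemma mul_measureReal_exists_le_of_supermartingale [IsFiniteMeasure μ]
    (hW : Supermartingale W ℱ μ) (hW_nonneg : ∀ t ω, 0 ≤ W t ω) {c : ℝ} (hc : 0 ≤ c) (n : ℕ) :
    c * μ.real {ω | ∃ t ≤ n, c ≤ W t ω} ≤ μ[W 0] := by
  set τ : Ω → ℕ∞ := fun ω ↦ (hittingBtwn W (Set.Ici c) 0 n ω : ℕ)
  have hτ : IsStoppingTime ℱ τ :=
    hW.stronglyAdapted.adapted.isStoppingTime_hittingBtwn measurableSet_Ici
  have hτ_le ω : τ ω ≤ n := Nat.cast_le.2 (hittingBtwn_le ω)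
  have hreach : {ω | ∃ t ≤ n, c ≤ W t ω} ⊆ {ω | c ≤ stoppedValue W τ ω} := by
    rintro ω ⟨t, htn, hct⟩
    exact stoppedValue_hittingBtwn_mem ⟨t, ⟨zero_le, htn⟩, hct⟩
  have hstopped_int : Integrable (stoppedValue W τ) μ :=
    integrable_stoppedValue ℕ hτ hW.integrable hτ_le
  have hstopped_le : μ[stoppedValue W τ] ≤ μ[W 0] := by
    have h := hW.neg.expected_stoppedValue_mono (isStoppingTime_const ℱ 0) hτ
      (fun _ ↦ zero_le) hτ_le
    simpa [stoppedValue, integral_neg] using h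
  calc c * μ.real {ω | ∃ t ≤ n, c ≤ W t ω}
      ≤ c * μ.real {ω | c ≤ stoppedValue W τ ω} :=
        mul_le_mul_of_nonneg_left (measureReal_mono hreach) hc
    _ ≤ μ[stoppedValue W τ] :=
        mul_meas_ge_le_integral_of_nonneg (ae_of_all _ fun ω ↦ hW_nonneg _ ω) hstopped_int c
    _ ≤ μ[W 0] := hstopped_le

end Ville

section Deviation

variable {Ω ι α : Type*} {m0 : MeasurableSpace Ω} {μ : Measure Ω}

lemma measure_exists_lt_le_of_forall_gt [LinearOrder α] [TopologicalSpace α] [OrderTopology α]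
    [DenselyOrdered α] [NoMaxOrder α] [FirstCountableTopology α] {p : ι → Prop} {S : ι → Ω → α}
    {r : α} {c : ENNReal} (hc : ∀ r' > r, μ {ω | ∃ i, p i ∧ r' ≤ S i ω} ≤ c) :
    μ {ω | ∃ i, p i ∧ r < S i ω} ≤ c := by
  obtain ⟨u, hu_anti, hu_gt, hu_tendsto⟩ := exists_seq_strictAnti_tendsto r
  have hmono : Monotone fun k ↦ {ω | ∃ i, p i ∧ u k ≤ S i ω} :=
    fun j k hjk ω ⟨i, hi, hle⟩ ↦ ⟨i, hi, (hu_anti.antitone hjk).trans hle⟩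
  have hcover : {ω | ∃ i, p i ∧ r < S i ω} ⊆ ⋃ k, {ω | ∃ i, p i ∧ u k ≤ S i ω} := by
    rintro ω ⟨i, hi, hlt⟩
    obtain ⟨k, hk⟩ := (hu_tendsto.eventually_le_const hlt).exists
    exact Set.mem_iUnion.2 ⟨k, i, hi, hk⟩
  calc μ {ω | ∃ i, p i ∧ r < S i ω}
      ≤ μ (⋃ k, {ω | ∃ i, p i ∧ u k ≤ S i ω}) := measure_mono hcover
    _ = ⨆ k, μ {ω | ∃ i, p i ∧ u k ≤ S i ω} := hmono.measure_iUnion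
    _ ≤ c := iSup_le fun k ↦ hc _ (hu_gt k)

lemma ofReal_one_sub_le_measure_of_measure_compl_le [IsProbabilityMeasure μ] {s : Set Ω} {δ : ℝ}
    (hδ : 0 ≤ δ) (hs : μ sᶜ ≤ ENNReal.ofReal δ) : ENNReal.ofReal (1 - δ) ≤ μ s := by
  rw [ENNReal.ofReal_sub 1 hδ, ENNReal.ofReal_one, tsub_le_iff_right, ← measure_univ (μ := μ)]
  exact (measure_univ_le_add_compl s).trans (by gcongr)

lemma log_two_div_pos {δ : ℝ} (hδ : δ ∈ Set.Ioo (0 : ℝ) 1) : 0 < log (2 / δ) :=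
  log_pos ((one_lt_div hδ.1).2 (by linarith [hδ.2]))

end Deviation

section SelfNormalized

variable {H : Type*} [NormedAddCommGroup H] [InnerProductSpace ℝ H]

/-- The noise-weighted sum `M_t = ∑_{1 ≤ i ≤ t} e_i x_i` along one path. -/
noncomputable def noiseSum (e : ℕ → ℝ) (x : ℕ → H) (t : ℕ) : H :=
  ∑ i ∈ Finset.Icc 1 t, e i • x i

/-- The accumulated variance proxy `∑_{1 ≤ i ≤ t} v_i ‖T_i x_i‖²` along one path. -/
noncomputable def normalizedVariation (v : ℕ → ℝ) (x : ℕ → H) (T : ℕ → H →L[ℝ] H) (t : ℕ) : ℝ :=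
  ∑ i ∈ Finset.Icc 1 t, v i * ‖T i (x i)‖ ^ 2

/-- The process `exp (-ψ(l) D_t) cosh (l ‖T_t M_t‖)` along one path, where `ψ` is the
Bernstein exponent, `D_t` the normalized variation and `M_t` the noise sum. -/
noncomputable def tiltedCosh (B l : ℝ) (e v : ℕ → ℝ) (x : ℕ → H) (T : ℕ → H →L[ℝ] H) (t : ℕ) :
    ℝ :=
  exp (-(bernsteinExponent B l * normalizedVariation v x T t)) * cosh ‖l • T t (noiseSum e x t)‖

lemma noiseSum_succ (e : ℕ → ℝ) (x : ℕ → H) (t : ℕ) :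
    noiseSum e x (t + 1) = noiseSum e x t + e (t + 1) • x (t + 1) :=
  Finset.sum_Icc_succ_top (by omega) _

lemma normalizedVariation_succ (v : ℕ → ℝ) (x : ℕ → H) (T : ℕ → H →L[ℝ] H) (t : ℕ) :
    normalizedVariation v x T (t + 1) =
      normalizedVariation v x T t + v (t + 1) * ‖T (t + 1) (x (t + 1))‖ ^ 2 :=
  Finset.sum_Icc_succ_top (by omega) _

lemma normalizedVariation_mono {v : ℕ → ℝ} {n t : ℕ} (hv : ∀ i, 1 ≤ i → i ≤ n → 0 ≤ v i)
    (x : ℕ → H) (T : ℕ → H →L[ℝ] H) (htn : t ≤ n) :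
    normalizedVariation v x T t ≤ normalizedVariation v x T n := by
  refine Finset.sum_le_sum_of_subset_of_nonneg (Finset.Icc_subset_Icc_right htn) fun i hi _ ↦ ?_
  have hvi : 0 ≤ v i := hv i (Finset.mem_Icc.1 hi).1 (Finset.mem_Icc.1 hi).2
  positivity

lemma tiltedCosh_nonneg (B l : ℝ) (e v : ℕ → ℝ) (x : ℕ → H) (T : ℕ → H →L[ℝ] H) (t : ℕ) :
    0 ≤ tiltedCosh B l e v x T t :=
  mul_nonneg (exp_pos _).le (cosh_pos _).le

lemma tiltedCosh_zero (B l : ℝ) (e v : ℕ → ℝ) (x : ℕ → H) (T : ℕ → H →L[ℝ] H) :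
    tiltedCosh B l e v x T 0 = 1 := by
  simp [tiltedCosh, noiseSum, normalizedVariation]

lemma tiltedCosh_succ (B l : ℝ) (e v : ℕ → ℝ) (x : ℕ → H) (T : ℕ → H →L[ℝ] H) (t : ℕ) :
    tiltedCosh B l e v x T (t + 1) =
      exp (-(bernsteinExponent B l * normalizedVariation v x T (t + 1))) *
        cosh ‖l • T (t + 1) (noiseSum e x t) + e (t + 1) • l • T (t + 1) (x (t + 1))‖ := by
  rw [tiltedCosh, noiseSum_succ, map_add, map_smul, smul_add, smul_comm l]

lemma exp_div_two_le_cosh_norm_smul {l r : ℝ} (hl : 0 ≤ l) {z : H} (hr : r ≤ ‖z‖) :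
    exp (l * r) / 2 ≤ cosh ‖l • z‖ := by
  have hexp : exp (l * r) ≤ exp ‖l • z‖ := by
    rw [norm_smul_of_nonneg hl]
    gcongr
  rw [cosh_eq]
  linarith [exp_pos (-‖l • z‖)]

lemma le_tiltedCosh {B l r V : ℝ} {e v : ℕ → ℝ} {x : ℕ → H} {T : ℕ → H →L[ℝ] H} {t : ℕ}
    (hl : 0 ≤ l) (hlB : l * B ≤ 1) (hV : normalizedVariation v x T t ≤ V)
    (hr : r ≤ ‖T t (noiseSum e x t)‖) :
    exp (l * r - bernsteinExponent B l * V) / 2 ≤ tiltedCosh B l e v x T t := by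
  have hψ := bernsteinExponent_nonneg hlB
  calc exp (l * r - bernsteinExponent B l * V) / 2
      = exp (-(bernsteinExponent B l * V)) * (exp (l * r) / 2) := by
        rw [sub_eq_neg_add, exp_add, mul_div_assoc]
    _ ≤ tiltedCosh B l e v x T t := by
        rw [tiltedCosh]
        gcongr
        exact exp_div_two_le_cosh_norm_smul hl hr

variable {B l : ℝ}

lemma IsSymmInvSqrt.exp_mul_cosh_add_outerProd_le {T T' A : H →L[ℝ] H} {x : H}
    (hT : IsSymmInvSqrt T A) (hT' : IsSymmInvSqrt T' (A + outerProd x)) (hB : 0 ≤ B)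
    (hl : 0 ≤ l) (hlB : l * B < 1) {s : ℝ} (hs : 0 ≤ s) (D : ℝ) (y : H) :
    exp (-(bernsteinExponent B l * (D + s * ‖T' x‖ ^ 2))) *
        (cosh ‖l • T' y‖ * exp (bernsteinExponent B ‖l • T' x‖ * s)) ≤
      exp (-(bernsteinExponent B l * D)) * cosh ‖l • T y‖ := by
  have hcosh : cosh ‖l • T' y‖ ≤ cosh ‖l • T y‖ := by
    rw [cosh_le_cosh, abs_norm, abs_norm, norm_smul, norm_smul]
    gcongr
    exact hT.norm_add_outerProd_apply_le hT' y
  have hexponent : bernsteinExponent B ‖l • T' x‖ * s ≤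
      bernsteinExponent B l * ‖T' x‖ ^ 2 * s := by
    rw [norm_smul_of_nonneg hl]
    gcongr
    exact bernsteinExponent_mul_le hB hl hlB (hT.norm_add_outerProd_apply_self_le_one hT')
  calc exp (-(bernsteinExponent B l * (D + s * ‖T' x‖ ^ 2))) *
        (cosh ‖l • T' y‖ * exp (bernsteinExponent B ‖l • T' x‖ * s))
      = exp (-(bernsteinExponent B l * (D + s * ‖T' x‖ ^ 2)) +
          bernsteinExponent B ‖l • T' x‖ * s) * cosh ‖l • T' y‖ := by
        rw [exp_add]; ring
    _ ≤ exp (-(bernsteinExponent B l * D)) * cosh ‖l • T y‖ := by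
        gcongr
        linarith

variable {Ω : Type*} {m0 : MeasurableSpace Ω}

/-- Up to time `n`, the design `X` is predictable, the noise `ε` is adapted and conditionally
Bernstein with predictable variance proxy `v` and scale `B`, and `T t ω` is an inverse square root
of the regularised Gram operator of the design. The step from time `t` to `t + 1` uses the design
point `X (t + 1)`, known at time `t`. -/
structure IsBernsteinRegression (μ : Measure Ω) (ℱ : Filtration ℕ m0) (X : ℕ → Ω → H)
    (ε v : ℕ → Ω → ℝ) (T : ℕ → Ω → H →L[ℝ] H) (ρ B : ℝ) (n : ℕ) : Prop where
  regularization_ne_zero : ρ ≠ 0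
  scale_nonneg : 0 ≤ B
  isSymmInvSqrt : ∀ t ω, IsSymmInvSqrt (T t ω) (regGram ρ (X · ω) t)
  stronglyMeasurable_design : ∀ t < n, StronglyMeasurable[ℱ t] (X (t + 1))
  stronglyMeasurable_noise : ∀ t < n, StronglyMeasurable[ℱ (t + 1)] (ε (t + 1))
  measurable_variance : ∀ t < n, Measurable[ℱ t] (v (t + 1))
  noise : ∀ t < n, HasCondBernsteinMoments μ (ℱ t) (ε (t + 1)) (v (t + 1)) B

namespace IsBernsteinRegression

variable {μ : Measure Ω} {ℱ : Filtration ℕ m0} {X : ℕ → Ω → H} {ε v : ℕ → Ω → ℝ}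
  {T : ℕ → Ω → H →L[ℝ] H} {ρ : ℝ} {n t : ℕ}

lemma isSymmInvSqrt_succ (h : IsBernsteinRegression μ ℱ X ε v T ρ B n) (t : ℕ) (ω : Ω) :
    IsSymmInvSqrt (T (t + 1) ω) (regGram ρ (X · ω) t + outerProd (X (t + 1) ω)) :=
  regGram_succ ρ (X · ω) t ▸ h.isSymmInvSqrt (t + 1) ω

lemma stronglyMeasurable_design_of_le_succ (h : IsBernsteinRegression μ ℱ X ε v T ρ B n)
    (htn : t < n) (i : ℕ) (hi : 1 ≤ i) (hit : i ≤ t + 1) : StronglyMeasurable[ℱ t] (X i) := by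
  obtain ⟨j, rfl⟩ := Nat.exists_eq_add_of_le' hi
  exact (h.stronglyMeasurable_design j (by omega)).mono (ℱ.mono (by omega))

lemma stronglyMeasurable_noiseSum (h : IsBernsteinRegression μ ℱ X ε v T ρ B n) (htn : t ≤ n) :
    StronglyMeasurable[ℱ t] fun ω ↦ noiseSum (ε · ω) (X · ω) t := by
  induction t with
  | zero => exact stronglyMeasurable_const
  | succ t ih =>
    simp only [noiseSum_succ]
    have hmono : ℱ t ≤ ℱ (t + 1) := ℱ.mono t.le_succ
    exact ((ih (by omega)).mono hmono).add ((h.stronglyMeasurable_noise t htn).smul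
      ((h.stronglyMeasurable_design t htn).mono hmono))

lemma measurable_normalizedVariation_succ (h : IsBernsteinRegression μ ℱ X ε v T ρ B n)
    (htn : t < n) :
    Measurable[ℱ t] fun ω ↦ normalizedVariation (v · ω) (X · ω) (T · ω) (t + 1) := by
  have hstep {t : ℕ} (htn : t < n) :
      Measurable[ℱ t] fun ω ↦ v (t + 1) ω * ‖T (t + 1) ω (X (t + 1) ω)‖ ^ 2 :=
    (h.measurable_variance t htn).mul
      ((measurable_norm_apply_of_isSymmInvSqrt_regGram h.regularization_ne_zero h.isSymmInvSqrt
        (h.stronglyMeasurable_design_of_le_succ htn) (h.stronglyMeasurable_design t htn)).pow_const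
          2)
  simp only [normalizedVariation]
  refine Finset.measurable_fun_sum _ fun i hi ↦ ?_
  obtain ⟨hi, hit⟩ := Finset.mem_Icc.1 hi
  obtain ⟨j, rfl⟩ := Nat.exists_eq_add_of_le' hi
  exact (hstep (by omega)).mono (ℱ.mono (by omega)) le_rfl

lemma measurable_tiltedCosh (h : IsBernsteinRegression μ ℱ X ε v T ρ B n) (l : ℝ) (htn : t ≤ n) :
    Measurable[ℱ t] fun ω ↦ tiltedCosh B l (ε · ω) (v · ω) (X · ω) (T · ω) t := by
  cases t with
  | zero =>
    simp only [tiltedCosh_zero]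
    exact measurable_const
  | succ t =>
    have hmono : ℱ t ≤ ℱ (t + 1) := ℱ.mono t.le_succ
    have hnorm := measurable_norm_apply_of_isSymmInvSqrt_regGram h.regularization_ne_zero
      h.isSymmInvSqrt
      (fun i hi hit ↦ (h.stronglyMeasurable_design_of_le_succ htn i hi hit).mono hmono)
      (h.stronglyMeasurable_noiseSum htn)
    simp only [tiltedCosh, norm_smul]
    exact (measurable_exp.comp
      (((h.measurable_normalizedVariation_succ htn).mono hmono le_rfl).const_mul _).neg).mul
        (measurable_cosh.comp (hnorm.const_mul _))

lemma measurable_norm_smul_apply_add_smul (h : IsBernsteinRegression μ ℱ X ε v T ρ B n) (l : ℝ)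
    (htn : t < n) :
    Measurable[(ℱ t).prod inferInstance] fun p : Ω × ℝ ↦
      ‖l • T (t + 1) p.1 (noiseSum (ε · p.1) (X · p.1) t) +
        p.2 • l • T (t + 1) p.1 (X (t + 1) p.1)‖ := by
  let : MeasurableSpace Ω := ℱ t
  have hsum : StronglyMeasurable fun p : Ω × ℝ ↦
      l • (noiseSum (ε · p.1) (X · p.1) t + p.2 • X (t + 1) p.1) :=
    (((h.stronglyMeasurable_noiseSum htn.le).comp_measurable measurable_fst).add
      (measurable_snd.stronglyMeasurable.smul
        ((h.stronglyMeasurable_design t htn).comp_measurable measurable_fst))).const_smul l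
  have hnorm := measurable_norm_apply_of_isSymmInvSqrt_regGram (x := fun i p ↦ X i p.1)
    (T := fun i p ↦ T i p.1) (t := t + 1) h.regularization_ne_zero (fun i p ↦ h.isSymmInvSqrt i p.1)
    (fun i hi hit ↦
      (h.stronglyMeasurable_design_of_le_succ htn i hi hit).comp_measurable (g := Prod.fst)
        measurable_fst) hsum
  simpa only [map_smul, map_add, smul_add, smul_comm l] using hnorm

lemma integrable_and_condExp_tiltedCosh_succ_le [IsFiniteMeasure μ]
    (h : IsBernsteinRegression μ ℱ X ε v T ρ B n) (hl : 0 ≤ l) (hlB : l * B < 1) (htn : t < n)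
    (hint : Integrable (fun ω ↦ tiltedCosh B l (ε · ω) (v · ω) (X · ω) (T · ω) t) μ) :
    Integrable (fun ω ↦ tiltedCosh B l (ε · ω) (v · ω) (X · ω) (T · ω) (t + 1)) μ ∧
      μ[fun ω ↦ tiltedCosh B l (ε · ω) (v · ω) (X · ω) (T · ω) (t + 1) | ℱ t] ≤ᵐ[μ]
        fun ω ↦ tiltedCosh B l (ε · ω) (v · ω) (X · ω) (T · ω) t := by
  have hnoise := h.noise t htn
  rw [← MeasurableSpace.comap_id (m := ℱ t)] at hnoise
  have hsmall ω : ‖l • T (t + 1) ω (X (t + 1) ω)‖ * B < 1 := by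
    refine lt_of_le_of_lt ?_ hlB
    rw [norm_smul_of_nonneg hl]
    exact mul_le_mul_of_nonneg_right (mul_le_of_le_one_right hl
      ((h.isSymmInvSqrt t ω).norm_add_outerProd_apply_self_le_one (h.isSymmInvSqrt_succ t ω)))
      h.scale_nonneg
  have hweight : Measurable[ℱ t] fun ω ↦ exp
      (-(bernsteinExponent B l * normalizedVariation (v · ω) (X · ω) (T · ω) (t + 1))) :=
    measurable_exp.comp ((h.measurable_normalizedVariation_succ htn).const_mul _).neg
  simp only [tiltedCosh_succ]
  have hstep := hnoise.integrable_and_condExp_mul_cosh_le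
    (a := fun ω ↦ l • T (t + 1) ω (noiseSum (ε · ω) (X · ω) t))
    (g := fun ω ↦ l • T (t + 1) ω (X (t + 1) ω)) (measurable_id'' (ℱ.le t))
    h.scale_nonneg hweight (fun ω ↦ (exp_pos _).le) (h.measurable_norm_smul_apply_add_smul l htn)
    hsmall hint ?_
  · simpa only [MeasurableSpace.comap_id, id] using hstep
  filter_upwards [hnoise.ae_variance_nonneg] with ω hv
  rw [tiltedCosh, normalizedVariation_succ]
  exact (h.isSymmInvSqrt t ω).exp_mul_cosh_add_outerProd_le (h.isSymmInvSqrt_succ t ω)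
    h.scale_nonneg hl hlB hv _ _

lemma supermartingale_tiltedCosh [IsFiniteMeasure μ]
    (h : IsBernsteinRegression μ ℱ X ε v T ρ B n) (hl : 0 ≤ l) (hlB : l * B < 1) :
    Supermartingale
      (fun t ω ↦ tiltedCosh B l (ε · ω) (v · ω) (X · ω) (T · ω) (min t n)) ℱ μ := by
  have hint : ∀ t ≤ n,
      Integrable (fun ω ↦ tiltedCosh B l (ε · ω) (v · ω) (X · ω) (T · ω) t) μ := by
    intro t
    induction t with
    | zero => simp only [tiltedCosh_zero, integrable_const, implies_true]
    | succ t ih =>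
      exact fun htn ↦
        (h.integrable_and_condExp_tiltedCosh_succ_le hl hlB htn (ih (by omega))).1
  exact supermartingale_min_of_forall_lt
    (fun t htn ↦ (h.measurable_tiltedCosh l htn).stronglyMeasurable) hint
    fun t htn ↦ (h.integrable_and_condExp_tiltedCosh_succ_le hl hlB htn (hint t htn.le)).2

lemma ae_normalizedVariation_mono (h : IsBernsteinRegression μ ℱ X ε v T ρ B n) :
    ∀ᵐ ω ∂μ, ∀ t ≤ n, normalizedVariation (v · ω) (X · ω) (T · ω) t ≤
      normalizedVariation (v · ω) (X · ω) (T · ω) n := by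
  have hv : ∀ᵐ ω ∂μ, ∀ t < n, 0 ≤ v (t + 1) ω :=
    ae_all_iff.2 fun t ↦ eventually_imp_distrib_left.2 fun htn ↦ (h.noise t htn).ae_variance_nonneg
  filter_upwards [hv] with ω hω t htn
  refine normalizedVariation_mono (fun i hi hin ↦ ?_) _ _ htn
  obtain ⟨j, rfl⟩ := Nat.exists_eq_add_of_le' hi
  exact hω j hin

lemma measureReal_exists_le_norm_le [IsProbabilityMeasure μ]
    (h : IsBernsteinRegression μ ℱ X ε v T ρ B n) (hl : 0 ≤ l) (hlB : l * B < 1) {V : ℝ}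
    (hV : ∀ᵐ ω ∂μ, normalizedVariation (v · ω) (X · ω) (T · ω) n ≤ V) (r : ℝ) :
    μ.real {ω | ∃ t ≤ n, r ≤ ‖T t ω (noiseSum (ε · ω) (X · ω) t)‖} ≤
      2 * exp (bernsteinExponent B l * V - l * r) := by
  set W : ℕ → Ω → ℝ := fun t ω ↦ tiltedCosh B l (ε · ω) (v · ω) (X · ω) (T · ω) (min t n)
  set c := exp (l * r - bernsteinExponent B l * V) / 2 with hc
  have hreach : {ω | ∃ t ≤ n, r ≤ ‖T t ω (noiseSum (ε · ω) (X · ω) t)‖} ≤ᵐ[μ]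
      {ω | ∃ t ≤ n, c ≤ W t ω} := by
    filter_upwards [hV, h.ae_normalizedVariation_mono] with ω hVω hmono
    rintro ⟨t, htn, hr⟩
    refine ⟨t, htn, ?_⟩
    simp only [W, min_eq_left htn]
    exact le_tiltedCosh hl hlB.le ((hmono t htn).trans hVω) hr
  have hville := mul_measureReal_exists_le_of_supermartingale
    (h.supermartingale_tiltedCosh hl hlB) (fun t ω ↦ tiltedCosh_nonneg ..)
    (show 0 ≤ c by positivity) n
  have hW_zero : μ[W 0] = 1 := by simp [W, tiltedCosh_zero]
  calc μ.real {ω | ∃ t ≤ n, r ≤ ‖T t ω (noiseSum (ε · ω) (X · ω) t)‖}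
      ≤ μ.real {ω | ∃ t ≤ n, c ≤ W t ω} :=
        ENNReal.toReal_mono (measure_ne_top _ _) (measure_mono_ae hreach)
    _ ≤ c⁻¹ := by
        rw [← one_div, le_div_iff₀' (by positivity), ← hW_zero]
        exact hville
    _ = 2 * exp (bernsteinExponent B l * V - l * r) := by
        rw [hc, inv_div, ← neg_sub (l * r), exp_neg, div_eq_mul_inv]

lemma measureReal_exists_le_norm_le_of_le_sq [IsProbabilityMeasure μ]
    (h : IsBernsteinRegression μ ℱ X ε v T ρ B n) {C δ : ℝ} (hC : 0 < C)
    (hV : ∀ᵐ ω ∂μ, normalizedVariation (v · ω) (X · ω) (T · ω) n ≤ C ^ 2)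
    (hδ : δ ∈ Set.Ioo (0 : ℝ) 1) :
    μ.real {ω | ∃ t ≤ n, B * log (2 / δ) + C * √(2 * log (2 / δ)) ≤
      ‖T t ω (noiseSum (ε · ω) (X · ω) t)‖} ≤ δ := by
  obtain ⟨l, hl, hlB, hexponent⟩ :=
    exists_bernsteinExponent_mul_sub_eq h.scale_nonneg hC (log_two_div_pos hδ)
  refine (h.measureReal_exists_le_norm_le hl hlB hV _).trans_eq ?_
  rw [hexponent, exp_neg, exp_log (div_pos two_pos hδ.1), inv_div]
  ring

theorem measure_exists_lt_norm_le [IsProbabilityMeasure μ]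
    (h : IsBernsteinRegression μ ℱ X ε v T ρ B n) {C δ : ℝ} (hC : 0 ≤ C)
    (hV : ∀ᵐ ω ∂μ, normalizedVariation (v · ω) (X · ω) (T · ω) n ≤ C ^ 2)
    (hδ : δ ∈ Set.Ioo (0 : ℝ) 1) :
    μ {ω | ∃ t ≤ n, B * log (2 / δ) + C * √(2 * log (2 / δ)) <
      ‖T t ω (noiseSum (ε · ω) (X · ω) t)‖} ≤ ENNReal.ofReal δ := by
  have hlog : 0 < log (2 / δ) := log_two_div_pos hδ
  refine measure_exists_lt_le_of_forall_gt fun r hr ↦ ?_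
  set s := √(2 * log (2 / δ))
  have hs : 0 < s := sqrt_pos.2 (by positivity)
  obtain ⟨C', hC', rfl⟩ : ∃ C' > C, B * log (2 / δ) + C' * s = r :=
    ⟨(r - B * log (2 / δ)) / s, (lt_div_iff₀ hs).2 (lt_sub_iff_add_lt'.2 hr), by field_simp; ring⟩
  have hV' : ∀ᵐ ω ∂μ, normalizedVariation (v · ω) (X · ω) (T · ω) n ≤ C' ^ 2 :=
    hV.mono fun ω hω ↦ hω.trans (pow_le_pow_left₀ hC hC'.le 2)
  exact (ENNReal.le_ofReal_iff_toReal_le (measure_ne_top _ _) hδ.1.le).2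
    (h.measureReal_exists_le_norm_le_of_le_sq (hC.trans_lt hC') hV' hδ)

end IsBernsteinRegression

end SelfNormalized

theorem stmt_3_general
    {H : Type*} [NormedAddCommGroup H] [InnerProductSpace ℝ H]
    {Ω : Type*} {m0 : MeasurableSpace Ω} {μ : Measure Ω} [IsProbabilityMeasure μ]
    (ℱ : Filtration ℕ m0)
    (X : ℕ → Ω → H) (ε : ℕ → Ω → ℝ)
    (hX : ∀ t, 1 ≤ t → StronglyMeasurable[ℱ (t - 1)] (X t))
    (hεmeas : ∀ t, 1 ≤ t → StronglyMeasurable[ℱ t] (ε t))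
    (hε0 : ∀ t, 1 ≤ t → μ[ε t | ℱ (t - 1)] =ᵐ[μ] 0)
    (ρ : ℝ) (hρ : 0 < ρ)
    (Q Qinv : ℕ → Ω → H →L[ℝ] H)
    (hQpos : ∀ t ω, (Q t ω).IsPositive)
    (hQsq : ∀ t ω, Q t ω ∘L Q t ω =
      ρ • (1 : H →L[ℝ] H) + ∑ i ∈ Finset.Icc 1 t, outerProd (X i ω))
    (hQinv : ∀ t ω, Qinv t ω ∘L Q t ω = 1 ∧ Q t ω ∘L Qinv t ω = 1)
    (n : ℕ)
    (B : ℝ) (hB : 0 ≤ B) (σ : ℕ → Ω → ℝ)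
    (hσmeas : ∀ t, 1 ≤ t → t ≤ n → StronglyMeasurable[ℱ (t - 1)] (σ t))
    (hmom : ∀ t m, Integrable (fun ω => |ε t ω| ^ m) μ)
    (hbern : ∀ t, 1 ≤ t → t ≤ n → ∀ m : ℕ, 2 ≤ m →
      μ[fun ω => |ε t ω| ^ m | ℱ (t - 1)] ≤ᵐ[μ]
        fun ω => (1 / 2) * (Nat.factorial m : ℝ) * B ^ (m - 2) * σ t ω ^ 2)
    (C : ℝ) (hC : 0 ≤ C)
    (hCn : ∀ᵐ ω ∂μ, ∑ i ∈ Finset.Icc 1 n, σ i ω ^ 2 * ‖Qinv i ω (X i ω)‖ ^ 2 ≤ C ^ 2)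
    (δ : ℝ) (hδ : δ ∈ Set.Ioo (0 : ℝ) 1) :
    ENNReal.ofReal (1 - δ) ≤
      μ {ω | ∀ t, 1 ≤ t → t ≤ n →
        ‖Qinv t ω (∑ i ∈ Finset.Icc 1 t, ε i ω • X i ω)‖ ≤
          B * Real.log (2 / δ) + C * Real.sqrt (2 * Real.log (2 / δ))} := by
  have hregression : IsBernsteinRegression μ ℱ X ε (fun t ω ↦ σ t ω ^ 2) Qinv ρ B n :=
    { regularization_ne_zero := hρ.ne'
      scale_nonneg := hB
      isSymmInvSqrt := fun t ω ↦
        .of_isSymmetric (hQpos t ω).isSymmetric (hQsq t ω) (hQinv t ω).1 (hQinv t ω).2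
      stronglyMeasurable_design := fun t _ ↦ hX (t + 1) (by omega)
      stronglyMeasurable_noise := fun t _ ↦ hεmeas (t + 1) (by omega)
      measurable_variance := fun t htn ↦
        (hσmeas (t + 1) (by omega) (by omega)).measurable.pow_const 2
      noise := fun t htn ↦
        { aemeasurable := ((hεmeas (t + 1) (by omega)).mono (ℱ.le _)).measurable.aemeasurable
          integrable_abs_pow := hmom (t + 1)
          condExp_eq_zero := hε0 (t + 1) (by omega)
          condExp_abs_pow_le := hbern (t + 1) (by omega) (by omega) } }
  refine ofReal_one_sub_le_measure_of_measure_compl_le hδ.1.le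
    ((measure_mono fun ω hω ↦ ?_).trans (hregression.measure_exists_lt_norm_le hC hCn hδ))
  simp only [Set.mem_compl_iff, Set.mem_ofPred_eq, not_forall, not_le] at hω
  obtain ⟨t, -, htn, hlt⟩ := hω
  exact ⟨t, htn, hlt⟩

theorem stmt_3
    {H : Type*} [NormedAddCommGroup H] [InnerProductSpace ℝ H] [CompleteSpace H]
    [SecondCountableTopology H]
    {Ω : Type*} {m0 : MeasurableSpace Ω} {μ : Measure Ω} [IsProbabilityMeasure μ]
    (ℱ : Filtration ℕ m0)
    (X : ℕ → Ω → H) (ε : ℕ → Ω → ℝ)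
    (hX : ∀ t, 1 ≤ t → StronglyMeasurable[ℱ (t - 1)] (X t))
    (hεmeas : ∀ t, 1 ≤ t → StronglyMeasurable[ℱ t] (ε t))
    (hεint : ∀ t, 1 ≤ t → Integrable (ε t) μ)
    (hε0 : ∀ t, 1 ≤ t → μ[ε t | ℱ (t - 1)] =ᵐ[μ] 0)
    (ρ : ℝ) (hρ : 0 < ρ)
    (Q Qinv : ℕ → Ω → H →L[ℝ] H)
    (hQpos : ∀ t ω, (Q t ω).IsPositive)
    (hQsq : ∀ t ω, Q t ω ∘L Q t ω =
      ρ • (1 : H →L[ℝ] H) + ∑ i ∈ Finset.Icc 1 t, outerProd (X i ω))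
    (hQinv : ∀ t ω, Qinv t ω ∘L Q t ω = 1 ∧ Q t ω ∘L Qinv t ω = 1)
    (n : ℕ) (hn : 1 ≤ n)
    (B : ℝ) (hB : 0 < B) (σ : ℕ → Ω → ℝ)
    (hσmeas : ∀ t, 1 ≤ t → t ≤ n → StronglyMeasurable[ℱ (t - 1)] (σ t))
    (hmom : ∀ t m, Integrable (fun ω => |ε t ω| ^ m) μ)
    (hbern : ∀ t, 1 ≤ t → t ≤ n → ∀ m : ℕ, 2 ≤ m →
      μ[fun ω => |ε t ω| ^ m | ℱ (t - 1)] ≤ᵐ[μ]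
        fun ω => (1 / 2) * (Nat.factorial m : ℝ) * B ^ (m - 2) * σ t ω ^ 2)
    (C : ℝ) (hC : 0 ≤ C)
    (hCn : ∀ᵐ ω ∂μ, ∑ i ∈ Finset.Icc 1 n, σ i ω ^ 2 * ‖Qinv i ω (X i ω)‖ ^ 2 ≤ C ^ 2)
    (δ : ℝ) (hδ : δ ∈ Set.Ioo (0 : ℝ) 1) :
    ENNReal.ofReal (1 - δ) ≤
      μ {ω | ∀ t, 1 ≤ t → t ≤ n →
        ‖Qinv t ω (∑ i ∈ Finset.Icc 1 t, ε i ω • X i ω)‖ ≤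
          B * Real.log (2 / δ) + C * Real.sqrt (2 * Real.log (2 / δ))} :=
  stmt_3_general ℱ X ε hX hεmeas hε0 ρ hρ Q Qinv hQpos hQsq hQinv n B hB.le σ hσmeas hmom hbern
    C hC hCn δ hδ
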